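/- arXiv:1308.5081 — 2 statements merged into one kernel-verified Lean document; each statement's English description precedes it below -/
import Mathlib

section
/- Let f ∈ C(𝕋), k, l ∈ ℕ with k, l ≥ 1, and h > 0. Then W₂(f, χ_h^{kl}) ≤ k·W₂(f, χ_h^l). -/
/-!
Let `A g = g * χ_h` be the averaging operator. By associativity of convolution,
`f * χ_h^m = A^m f` for `m ≥ 1` (`conv_chiPow`). On bounded continuous functions `A` is linear
(`conv_sub_left`), and it is a sup-norm contraction because `χ_h` is a probability density
(`abs_avg_le`). The claim follows from the telescoping identity
`f - A^{(k+1)l} f = (f - A^l f) + A^l (f - A^{kl} f)`: each increase of `k` by one costs at most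
`‖f - A^l f‖`.
-/

open MeasureTheory Real

/-- Uniform (sup) norm of a real function. -/
noncomputable def unorm (f : ℝ → ℝ) : ℝ := ⨆ u : ℝ, |f u|

/-- Convolution of two real functions. -/
noncomputable def conv (f g : ℝ → ℝ) : ℝ → ℝ := fun t => ∫ u : ℝ, f u * g (t - u)

/-- Normalized characteristic function of `(-h/2, h/2)`. -/
noncomputable def chi (h : ℝ) : ℝ → ℝ := fun t => if -h/2 < t ∧ t < h/2 then 1/h else 0

/-- Convolution powers `χ_h^k` (defined for `k ≥ 1`; junk value `0` at `k = 0`). -/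
noncomputable def chiPow (h : ℝ) : ℕ → (ℝ → ℝ)
  | 0 => fun _ => 0
  | 1 => chi h
  | (k+2) => conv (chiPow h (k+1)) (chi h)

/-- Special modulus of continuity `W₂(f, χ_h^k) = ‖f - f*χ_h^k‖`. -/
noncomputable def W2 (f : ℝ → ℝ) (h : ℝ) (k : ℕ) : ℝ :=
  unorm (fun t => f t - conv f (chiPow h k) t)

/-- `W₂*(f, χ_h^k) = sup_{0 < u ≤ h} W₂(f, χ_u^k)`. -/
noncomputable def W2star (f : ℝ → ℝ) (h : ℝ) (k : ℕ) : ℝ :=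
  ⨆ u : Set.Ioc (0:ℝ) h, W2 f u.1 k

/-- Second Peetre K-functional: infimum over twice continuously differentiable
1-periodic functions `g` of `‖f - g‖ + h² ‖D²g‖`. -/
noncomputable def K2 (f : ℝ → ℝ) (h : ℝ) : ℝ :=
  ⨅ g : {g : ℝ → ℝ // ContDiff ℝ 2 g ∧ Function.Periodic g 1},
    unorm (fun t => f t - g.1 t) + h^2 * unorm (iteratedDeriv 2 g.1)

/-- Generalized K-functional `K̃₂(f, h₁, h₂)`. -/
noncomputable def Ktilde2 (f : ℝ → ℝ) (h1 h2 : ℝ) : ℝ :=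
  ⨅ p : {p : (ℝ → ℝ) × (ℝ → ℝ) //
      (ContDiff ℝ 1 p.1 ∧ Function.Periodic p.1 1) ∧
      (ContDiff ℝ 2 p.2 ∧ Function.Periodic p.2 1)},
    unorm (fun t => f t - p.1.1 t) + h1 * unorm (deriv (fun t => p.1.1 t - p.1.2 t))
      + h2^2 * unorm (iteratedDeriv 2 p.1.2)

/-- Classical second modulus of smoothness. -/
noncomputable def omega2 (f : ℝ → ℝ) (h : ℝ) : ℝ :=
  ⨆ u : Set.Ioc (0:ℝ) h, ⨆ t : ℝ, |f (t + u.1) - 2 * f t + f (t - u.1)|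

/-- `τ` is a real 1-periodic trigonometric polynomial of degree at most `n - 1`. -/
def IsTrigPolyDegLT (n : ℕ) (τ : ℝ → ℝ) : Prop :=
  ∃ a b : ℕ → ℝ, ∀ t : ℝ, τ t =
    ∑ j ∈ Finset.range n, (a j * Real.cos (2 * Real.pi * j * t) + b j * Real.sin (2 * Real.pi * j * t))

/-- Best approximation `E_{n-1}(f)` by trigonometric polynomials of degree at most `n-1`. -/
noncomputable def bestApprox (n : ℕ) (f : ℝ → ℝ) : ℝ :=
  ⨅ τ : {τ : ℝ → ℝ // IsTrigPolyDegLT n τ}, unorm (fun t => f t - τ.1 t)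

/-- Bounded continuous real functions, the class on which the averaging operator acts. -/
def IsBddCont (g : ℝ → ℝ) : Prop := Continuous g ∧ ∃ C, ∀ x, |g x| ≤ C

/-- The averaging operator `g ↦ g * χ_h`. -/
noncomputable def avg (h : ℝ) (g : ℝ → ℝ) : ℝ → ℝ := conv g (chi h)

theorem conv_eq_convolution (f g : ℝ → ℝ) :
    conv f g = convolution f g (ContinuousLinearMap.mul ℝ ℝ) volume := rfl

theorem chi_eq_indicator (h : ℝ) :
    chi h = (Set.Ioo (-h/2) (h/2)).indicator (fun _ => 1/h) := by
  funext t
  simp [chi, Set.indicator, Set.mem_Ioo]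

theorem integrable_chi (h : ℝ) : Integrable (chi h) := by
  rw [chi_eq_indicator, integrable_indicator_iff measurableSet_Ioo]
  exact integrableOn_const (by simp)

theorem chi_nonneg {h : ℝ} (hh : 0 < h) (t : ℝ) : 0 ≤ chi h t := by
  unfold chi
  split_ifs <;> positivity

theorem integral_chi {h : ℝ} (hh : 0 < h) : ∫ t, chi h t = 1 := by
  rw [chi_eq_indicator, integral_indicator measurableSet_Ioo, setIntegral_const, Measure.real,
    Real.volume_Ioo, ENNReal.toReal_ofReal (by linarith), smul_eq_mul]
  field_simp
  ring

theorem integrable_chiPow (h : ℝ) (n : ℕ) : Integrable (chiPow h (n + 1)) := by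
  induction n with
  | zero => exact integrable_chi h
  | succ n ih => exact ih.integrable_convolution (ContinuousLinearMap.mul ℝ ℝ) (integrable_chi h)

theorem IsBddCont.integrable_mul {g p : ℝ → ℝ} (hg : IsBddCont g) (hp : Integrable p) (t : ℝ) :
    Integrable (fun u => g u * p (t - u)) := by
  obtain ⟨hc, C, hC⟩ := hg
  exact (hp.comp_sub_left t).bdd_mul hc.aestronglyMeasurable (Filter.Eventually.of_forall hC)

theorem conv_sub_left {f g p : ℝ → ℝ} (hf : IsBddCont f) (hg : IsBddCont g)
    (hp : Integrable p) : conv (fun t => f t - g t) p = fun t => conv f p t - conv g p t := by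
  funext t
  simp only [conv, sub_mul]
  exact integral_sub (hf.integrable_mul hp t) (hg.integrable_mul hp t)

/-- Averaging is a sup-norm contraction, since `χ_h` is a probability density. -/
theorem abs_avg_le {g : ℝ → ℝ} {h M : ℝ} (hh : 0 < h) (hM : ∀ x, |g x| ≤ M) (t : ℝ) :
    |avg h g t| ≤ M := by
  calc |avg h g t| ≤ ∫ u, M * chi h (t - u) := by
        rw [← Real.norm_eq_abs]
        refine norm_integral_le_of_norm_le (((integrable_chi h).comp_sub_left t).const_mul M)
          (Filter.Eventually.of_forall fun u => ?_)
        rw [Real.norm_eq_abs, abs_mul, abs_of_nonneg (chi_nonneg hh _)]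
        exact mul_le_mul_of_nonneg_right (hM u) (chi_nonneg hh _)
    _ = M := by
        rw [integral_const_mul, integral_sub_left_eq_self (chi h) volume t, integral_chi hh,
          mul_one]

theorem IsBddCont.avg {g : ℝ → ℝ} (hg : IsBddCont g) {h : ℝ} (hh : 0 < h) :
    IsBddCont (avg h g) := by
  obtain ⟨hc, C, hC⟩ := hg
  refine ⟨?_, C, abs_avg_le hh hC⟩
  have hb : BddAbove (Set.range fun x => ‖g x‖) := ⟨C, by rintro _ ⟨x, rfl⟩; exact hC x⟩
  exact hb.continuous_convolution_left_of_integrable (ContinuousLinearMap.mul ℝ ℝ) hc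
    (integrable_chi h)

theorem IsBddCont.avg_iterate {g : ℝ → ℝ} (hg : IsBddCont g) {h : ℝ} (hh : 0 < h) (n : ℕ) :
    IsBddCont ((_root_.avg h)^[n] g) := by
  induction n with
  | zero => exact hg
  | succ n ih => rw [Function.iterate_succ_apply']; exact ih.avg hh

theorem IsBddCont.sub {f g : ℝ → ℝ} (hf : IsBddCont f) (hg : IsBddCont g) :
    IsBddCont (fun t => f t - g t) := by
  obtain ⟨hf, C, hC⟩ := hf
  obtain ⟨hg, D, hD⟩ := hg
  exact ⟨hf.sub hg, C + D, fun x => (abs_sub _ _).trans (add_le_add (hC x) (hD x))⟩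

theorem avg_iterate_sub {f g : ℝ → ℝ} (hf : IsBddCont f) (hg : IsBddCont g) {h : ℝ}
    (hh : 0 < h) (n : ℕ) :
    (avg h)^[n] (fun t => f t - g t) = fun t => (avg h)^[n] f t - (avg h)^[n] g t := by
  induction n with
  | zero => rfl
  | succ n ih =>
    simp only [Function.iterate_succ_apply', ih]
    exact conv_sub_left (hf.avg_iterate hh n) (hg.avg_iterate hh n) (integrable_chi h)

theorem abs_avg_iterate_le {g : ℝ → ℝ} {h M : ℝ} (hh : 0 < h) (hM : ∀ x, |g x| ≤ M) (n : ℕ) :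
    ∀ t, |(avg h)^[n] g t| ≤ M := by
  induction n with
  | zero => exact hM
  | succ n ih => rw [Function.iterate_succ_apply']; exact abs_avg_le hh ih

theorem conv_assoc {f p q : ℝ → ℝ} (hf : IsBddCont f) (hp : Integrable p) (hq : Integrable q) :
    conv f (conv p q) = conv (conv f p) q := by
  funext t
  simp only [conv_eq_convolution]
  refine (convolution_assoc (ContinuousLinearMap.mul ℝ ℝ) (ContinuousLinearMap.mul ℝ ℝ)
    (ContinuousLinearMap.mul ℝ ℝ) (ContinuousLinearMap.mul ℝ ℝ) (fun x y z => mul_assoc x y z)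
    hf.1.aestronglyMeasurable hp.aestronglyMeasurable hq.aestronglyMeasurable
    (Filter.Eventually.of_forall fun x => hf.integrable_mul hp x)
    (hp.norm.ae_convolution_exists (ContinuousLinearMap.mul ℝ ℝ) hq.norm) ?_).symm
  have hf' : IsBddCont (fun x => ‖f x‖) := by
    obtain ⟨hc, C, hC⟩ := hf
    exact ⟨hc.norm, C, fun x => by simpa using hC x⟩
  exact hf'.integrable_mul
    (hp.norm.integrable_convolution (ContinuousLinearMap.mul ℝ ℝ) hq.norm) t

theorem conv_chiPow {f : ℝ → ℝ} (hf : IsBddCont f) (h : ℝ) (n : ℕ) :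
    conv f (chiPow h (n + 1)) = (avg h)^[n + 1] f := by
  induction n with
  | zero => rfl
  | succ n ih =>
    rw [Function.iterate_succ_apply', ← ih]
    exact conv_assoc hf (integrable_chiPow h n) (integrable_chi h)

theorem W2_eq {f : ℝ → ℝ} (hf : IsBddCont f) (h : ℝ) {n : ℕ} (hn : 1 ≤ n) :
    W2 f h n = unorm (fun t => f t - (avg h)^[n] f t) := by
  obtain ⟨m, rfl⟩ := Nat.exists_eq_add_of_le' hn
  rw [W2, conv_chiPow hf]

theorem IsBddCont.abs_le_unorm {g : ℝ → ℝ} (hg : IsBddCont g) (t : ℝ) : |g t| ≤ unorm g := by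
  obtain ⟨-, C, hC⟩ := hg
  exact le_ciSup (f := fun u => |g u|) ⟨C, by rintro _ ⟨x, rfl⟩; exact hC x⟩ t

/-- The telescoping estimate `‖f - A^{kl} f‖ ≤ k ‖f - A^l f‖` for the averaging operator `A`,
stated pointwise with an arbitrary bound `M` for `f - A^l f`. -/
theorem abs_sub_avg_iterate_mul_le {f : ℝ → ℝ} (hf : IsBddCont f) {h M : ℝ} (hh : 0 < h) (l : ℕ)
    (hM : ∀ t, |f t - (avg h)^[l] f t| ≤ M) (k : ℕ) :
    ∀ t, |f t - (avg h)^[k * l] f t| ≤ k * M := by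
  induction k with
  | zero => simp
  | succ k ih =>
    intro t
    have h1 := abs_avg_iterate_le hh ih l t
    rw [avg_iterate_sub hf (hf.avg_iterate hh _) hh, ← Function.iterate_add_apply] at h1
    have h2 : (k + 1) * l = l + k * l := by ring
    rw [h2]
    calc |f t - (avg h)^[l + k * l] f t|
        ≤ |f t - (avg h)^[l] f t| + |(avg h)^[l] f t - (avg h)^[l + k * l] f t| :=
          abs_sub_le _ _ _
      _ ≤ M + k * M := add_le_add (hM t) h1
      _ = ((k + 1 : ℕ) : ℝ) * M := by push_cast; ring

/-- Lemma 1, inequality (2.5): `W₂(f, χ_h^{kl}) ≤ k·W₂(f, χ_h^l)`. -/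
theorem stmt12 (f : ℝ → ℝ) (hf : Continuous f) (hper : Function.Periodic f 1)
    (k l : ℕ) (hk : 1 ≤ k) (hl : 1 ≤ l) (h : ℝ) (hh : 0 < h) :
    W2 f h (k * l) ≤ k * W2 f h l := by
  have hb : IsBddCont f := by
    obtain ⟨C, hC⟩ := (hper.isBounded_of_continuous one_ne_zero hf).exists_norm_le
    exact ⟨hf, C, fun x => hC _ ⟨x, rfl⟩⟩
  rw [W2_eq hb h (Nat.mul_pos hk hl), W2_eq hb h hl]
  exact ciSup_le (abs_sub_avg_iterate_mul_le hb hh l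
    (hb.sub (hb.avg_iterate hh l)).abs_le_unorm k)
end

section
/- Let f ∈ C(𝕋), h > 0, and define g(t) = (12/h²)·∫₀^h (f*χ_u²)(t)·u²·χ_h²(u) du. Then g is twice continuously differentiable, D²g(t) = -(12/h²)·(f(t) - (f*χ_h²)(t)) for all t, and hence ‖D²g‖ = (12/h²)·W₂(f, χ_h²). -/
/-!
Write `F₁, F₂, F₃, F₄` for the iterated primitives of `f`. Since `χ_u²` is the tent function
`max 0 (u - |x|) / u²` (`chiPow_two`), integration by parts turns convolution with it into a second
difference of the second primitive:
`u² (f * χ_u²)(t) = F₂(t+u) - 2 F₂(t) + F₂(t-u)` (`sq_mul_conv_chiPow_two`).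
The integral over `u` defining `g` has the weight `(h - u) / h²`, so the same integration by parts,
now applied to `F₂`, gives the closed form
`g(t) = (12 / h⁴) (F₄(t+h) - 2 F₄(t) + F₄(t-h) - h² F₂(t))`.
Differentiating twice lowers each index by two, and the second difference of `F₂` that appears is
again `h² (f * χ_h²)(t)`.
-/

open MeasureTheory Real

/-- The primitive of `f` that vanishes at `0`. -/
noncomputable def prim (f : ℝ → ℝ) : ℝ → ℝ := fun x => ∫ u in (0:ℝ)..x, f u

lemma hasDerivAt_prim {f : ℝ → ℝ} (hf : Continuous f) (x : ℝ) :
    HasDerivAt (prim f) (f x) x :=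
  hf.integral_hasStrictDerivAt 0 x |>.hasDerivAt

lemma continuous_prim {f : ℝ → ℝ} (hf : Continuous f) : Continuous (prim f) :=
  continuous_iff_continuousAt.2 fun x => (hasDerivAt_prim hf x).continuousAt

lemma chiPow_two {h : ℝ} (hh : 0 < h) (t : ℝ) :
    chiPow h 2 t = max 0 (h - |t|) / h ^ 2 := by
  change (∫ u : ℝ, chi h u * chi h (t - u)) = _
  have hprod : (fun u : ℝ => chi h u * chi h (t - u)) =
      (Set.Ioo (max (-h/2) (t - h/2)) (min (h/2) (t + h/2))).indicator
        (fun _ => (1 / h ^ 2 : ℝ)) := by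
    funext u
    by_cases hu : u ∈ Set.Ioo (max (-h/2) (t - h/2)) (min (h/2) (t + h/2))
    · rw [Set.indicator_of_mem hu]
      obtain ⟨h1, h2⟩ := hu
      rw [max_lt_iff] at h1
      rw [lt_min_iff] at h2
      have e1 : -h/2 < u ∧ u < h/2 := ⟨h1.1, h2.1⟩
      have e2 : -h/2 < t - u ∧ t - u < h/2 := ⟨by linarith, by linarith⟩
      simp only [chi, if_pos e1, if_pos e2]
      field_simp
    · rw [Set.indicator_of_notMem hu]
      simp only [chi]
      split_ifs with h1 h2
      · exact absurd ⟨max_lt h1.1 (by linarith), lt_min h1.2 (by linarith)⟩ hu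
      all_goals simp
  have hlen : min (h/2) (t + h/2) - max (-h/2) (t - h/2) = h - |t| := by
    rcases le_total 0 t with ht | ht
    · rw [abs_of_nonneg ht, min_eq_left (by linarith), max_eq_right (by linarith)]; ring
    · rw [abs_of_nonpos ht, min_eq_right (by linarith), max_eq_left (by linarith)]; ring
  rw [hprod, integral_indicator measurableSet_Ioo, setIntegral_const, Real.volume_real_Ioo, hlen,
    max_comm, smul_eq_mul]
  ring

/-- Integration by parts on each half of the support of the tent function. -/
lemma sq_mul_conv_chiPow_two {f : ℝ → ℝ} (hf : Continuous f) {u : ℝ} (hu : 0 < u) (t : ℝ) :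
    conv f (chiPow u 2) t * u ^ 2 =
      prim (prim f) (t + u) - 2 * prim (prim f) t + prim (prim f) (t - u) := by
  have d1 := hasDerivAt_prim hf
  have d2 := hasDerivAt_prim (continuous_prim hf)
  have hstep : conv f (chiPow u 2) t * u ^ 2 =
      ∫ v in (t - u)..(t + u), f v * (u - |t - v|) := by
    rw [intervalIntegral.integral_of_le (by linarith), ← integral_indicator measurableSet_Ioc]
    simp only [conv]
    rw [← integral_mul_const]
    congr 1
    funext v
    rw [chiPow_two hu]
    by_cases hv : v ∈ Set.Ioc (t - u) (t + u)
    · have : |t - v| ≤ u := abs_le.2 ⟨by linarith [hv.2], by linarith [hv.1]⟩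
      rw [Set.indicator_of_mem hv, max_eq_right (by linarith)]
      field_simp
    · have : u ≤ |t - v| := by
        by_contra hlt
        have := abs_lt.1 (not_le.1 hlt)
        exact hv ⟨by linarith, by linarith⟩
      rw [Set.indicator_of_notMem hv, max_eq_left (by linarith)]
      simp
  have hleft : ∫ v in (t - u)..t, f v * (u - |t - v|) =
      u * prim f t - prim (prim f) t + prim (prim f) (t - u) := by
    rw [intervalIntegral.integral_congr (g := fun v => f v * (u - (t - v)))]
    · rw [intervalIntegral.integral_eq_sub_of_hasDerivAt
        (f := fun v => prim f v * (u - (t - v)) - prim (prim f) v)]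
      · ring
      · intro v _
        refine (((d1 v).mul (((hasDerivAt_id v).const_sub t).const_sub u)).sub (d2 v)).congr_deriv ?_
        simp
      · exact Continuous.intervalIntegrable (by fun_prop) _ _
    · intro v hv
      rw [Set.uIcc_of_le (by linarith)] at hv
      simp only [abs_of_nonneg (sub_nonneg.2 hv.2)]
  have hright : ∫ v in t..(t + u), f v * (u - |t - v|) =
      prim (prim f) (t + u) - prim (prim f) t - u * prim f t := by
    rw [intervalIntegral.integral_congr (g := fun v => f v * (u - (v - t)))]
    · rw [intervalIntegral.integral_eq_sub_of_hasDerivAt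
        (f := fun v => prim f v * (u - (v - t)) + prim (prim f) v)]
      · ring
      · intro v _
        refine (((d1 v).mul (((hasDerivAt_id v).sub_const t).const_sub u)).add (d2 v)).congr_deriv ?_
        simp
      · exact Continuous.intervalIntegrable (by fun_prop) _ _
    · intro v hv
      rw [Set.uIcc_of_le (by linarith)] at hv
      simp only [abs_of_nonpos (sub_nonpos.2 hv.1), neg_sub]
  rw [hstep, ← intervalIntegral.integral_add_adjacent_intervals (b := t)
    (Continuous.intervalIntegrable (by fun_prop) _ _)
    (Continuous.intervalIntegrable (by fun_prop) _ _), hleft, hright]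
  ring

lemma integral_second_difference {p : ℝ → ℝ} (hp : Continuous p) (h t : ℝ) :
    ∫ u in (0:ℝ)..h, (p (t + u) - 2 * p t + p (t - u)) * (h - u) =
      prim (prim p) (t + h) - 2 * prim (prim p) t + prim (prim p) (t - h) - h ^ 2 * p t := by
  have d1 := hasDerivAt_prim hp
  have d2 := hasDerivAt_prim (continuous_prim hp)
  rw [intervalIntegral.integral_eq_sub_of_hasDerivAt
    (f := fun u => (prim p (t + u) - prim p (t - u) - 2 * p t * u) * (h - u)
      + (prim (prim p) (t + u) + prim (prim p) (t - u)) - p t * u ^ 2)]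
  · simp only [add_zero, sub_zero]; ring
  · intro u _
    have a1 := (d1 (t + u)).comp_const_add t u
    have a2 := (d1 (t - u)).comp_const_sub t u
    have b1 := (d2 (t + u)).comp_const_add t u
    have b2 := (d2 (t - u)).comp_const_sub t u
    have c := ((a1.sub a2).sub ((hasDerivAt_id u).const_mul (2 * p t))).mul
      ((hasDerivAt_id u).const_sub h)
    refine ((c.add (b1.add b2)).sub (((hasDerivAt_id u).pow 2).const_mul (p t))).congr_deriv ?_
    simp
    ring
  · exact Continuous.intervalIntegrable (by fun_prop) _ _

lemma hasDerivAt_second_difference {p q r s : ℝ → ℝ} (hp : ∀ x, HasDerivAt p (q x) x)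
    (hr : ∀ x, HasDerivAt r (s x) x) (c h t : ℝ) :
    HasDerivAt (fun t => c * (p (t + h) - 2 * p t + p (t - h) - h ^ 2 * r t))
      (c * (q (t + h) - 2 * q t + q (t - h) - h ^ 2 * s t)) t :=
  ((((((hp (t + h)).comp_add_const t h).sub ((hp t).const_mul 2)).add
    ((hp (t - h)).comp_sub_const t h)).sub ((hr t).const_mul (h ^ 2))).const_mul c)

/-- The key construction (3.2)–(3.3): for
`g(t) = (12/h²)·∫₀^h (f*χ_u²)(t)·u²·χ_h²(u) du`, the function `g` is in `C²`,
`D²g = -(12/h²)(f - f*χ_h²)`, and hence `‖D²g‖ = (12/h²)·W₂(f, χ_h²)`. -/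
theorem stmt17 (f : ℝ → ℝ) (hf : Continuous f) (hper : Function.Periodic f 1)
    (h : ℝ) (hh : 0 < h) (g : ℝ → ℝ)
    (hg : ∀ t : ℝ, g t =
      (12 / h^2) * ∫ u in (0:ℝ)..h, conv f (chiPow u 2) t * u^2 * chiPow h 2 u) :
    ContDiff ℝ 2 g ∧
    (∀ t : ℝ, iteratedDeriv 2 g t = -(12 / h^2) * (f t - conv f (chiPow h 2) t)) ∧
    unorm (iteratedDeriv 2 g) = (12 / h^2) * W2 f h 2 := by
  have c1 := continuous_prim hf
  have c2 := continuous_prim c1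
  have c3 := continuous_prim c2
  have hg' : g = fun t => (12 / h ^ 4) * (prim (prim (prim (prim f))) (t + h)
      - 2 * prim (prim (prim (prim f))) t + prim (prim (prim (prim f))) (t - h)
      - h ^ 2 * prim (prim f) t) := by
    funext t
    have hint : ∫ u in (0:ℝ)..h, conv f (chiPow u 2) t * u^2 * chiPow h 2 u =
        ∫ u in (0:ℝ)..h, (prim (prim f) (t + u) - 2 * prim (prim f) t + prim (prim f) (t - u))
          * (h - u) * (1 / h ^ 2) := by
      refine intervalIntegral.integral_congr fun u hu => ?_
      rw [Set.uIcc_of_le hh.le] at hu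
      -- at `u = 0` the value of `chiPow u 2` is junk, but the factor `u ^ 2` vanishes there
      rcases hu.1.eq_or_lt with rfl | hu0
      · simp only [add_zero, sub_zero]; ring
      · rw [sq_mul_conv_chiPow_two hf hu0, chiPow_two hh, abs_of_pos hu0,
          max_eq_right (by linarith [hu.2])]
        ring
    rw [hg, hint, intervalIntegral.integral_mul_const, integral_second_difference c2]
    field_simp
  have D1 : ∀ t, HasDerivAt g ((12 / h ^ 4) * (prim (prim (prim f)) (t + h)
      - 2 * prim (prim (prim f)) t + prim (prim (prim f)) (t - h) - h ^ 2 * prim f t)) t := by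
    intro t
    rw [hg']
    exact hasDerivAt_second_difference (hasDerivAt_prim c3) (hasDerivAt_prim c1) _ _ _
  have e1 : deriv g = fun t => (12 / h ^ 4) * (prim (prim (prim f)) (t + h)
      - 2 * prim (prim (prim f)) t + prim (prim (prim f)) (t - h) - h ^ 2 * prim f t) :=
    funext fun t => (D1 t).deriv
  have D2 : ∀ t, HasDerivAt (deriv g) ((12 / h ^ 4) * (prim (prim f) (t + h)
      - 2 * prim (prim f) t + prim (prim f) (t - h) - h ^ 2 * f t)) t := by
    intro t
    rw [e1]
    exact hasDerivAt_second_difference (hasDerivAt_prim c2) (hasDerivAt_prim hf) _ _ _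
  have e2 : deriv (deriv g) = fun t => (12 / h ^ 4) * (prim (prim f) (t + h)
      - 2 * prim (prim f) t + prim (prim f) (t - h) - h ^ 2 * f t) :=
    funext fun t => (D2 t).deriv
  have hD : ∀ t : ℝ, iteratedDeriv 2 g t = -(12 / h^2) * (f t - conv f (chiPow h 2) t) := by
    intro t
    rw [iteratedDeriv_succ, iteratedDeriv_one, e2]
    simp only
    rw [← sq_mul_conv_chiPow_two hf hh]
    field_simp
    ring
  refine ⟨?_, hD, ?_⟩
  · rw [show (2 : WithTop ℕ∞) = 1 + 1 by norm_num, contDiff_succ_iff_deriv]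
    refine ⟨fun t => (D1 t).differentiableAt, by simp, ?_⟩
    rw [contDiff_one_iff_deriv]
    refine ⟨fun t => (D2 t).differentiableAt, ?_⟩
    rw [e2]
    fun_prop
  · simp only [unorm, W2]
    rw [Real.mul_iSup_of_nonneg (by positivity)]
    congr 1
    funext t
    rw [hD, abs_mul, abs_neg, abs_of_pos (by positivity : (0:ℝ) < 12 / h ^ 2)]
end
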